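/- Let Λ be an artin algebra and a an idempotent of Λ. If either id_Λ((Λ/⟨a⟩)/rad(Λ/⟨a⟩)) ≤ 1 or pd_Λ((Λ/⟨a⟩)/rad(Λ/⟨a⟩)) ≤ 1, then there exists a total order ⪯ on the isomorphism classes of simple Λ/⟨a⟩-modules such that whenever S ⪯ S' one has Ext^j_Λ(S, S') = 0 for all j > 0. -/

import Mathlib

/-!
The relation `Ext¹(S, T) ≠ 0` on the simple modules annihilated by `a` is well-founded (in one of
its two directions), so it carries an ordinal-valued height; comparing heights, with ties broken
by an arbitrary linear order on isomorphism classes, gives the required order. The groups `Extʲ`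
with `j ≥ 2` vanish by hypothesis.

Well-foundedness comes from a bound on Loewy lengths. Let `J` be the Jacobson radical of `Λ`, which
is nilpotent with `Λ / J` semisimple, since `Λ` is finite over an Artinian ring.
In the injective case, take an infinite chain `S₀, S₁, …` with `Ext¹(Sₙ, Sₙ₊₁) ≠ 0`. If `M` has
socle `Sₙ`, then `Ext²(-, Sₙ₊₁) = 0` lets a nonzero class in `Ext¹(Sₙ, Sₙ₊₁)` be lifted to
`Ext¹(M, Sₙ₊₁)`. The corresponding extension `0 → Sₙ₊₁ → E → M → 0` has socle `Sₙ₊₁`, because a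
simple submodule of `E` not contained in `Sₙ₊₁` would split the chosen class; and
`Jᵏ M ≠ 0` implies `Jᵏ⁺¹ E ≠ 0` (`exists_socle_step`). Iterating contradicts the nilpotency of `J`.
The projective case is dual, with tops in place of socles (`exists_top_step`).

Neither projective covers nor injective envelopes are needed, only the nilpotency of `J`.
-/

/-!
STATEMENT 15: Let `Λ` be an artin algebra and `a` an idempotent of `Λ`.  If either
`id_Λ((Λ/⟨a⟩)/rad(Λ/⟨a⟩)) ≤ 1` or `pd_Λ((Λ/⟨a⟩)/rad(Λ/⟨a⟩)) ≤ 1`, then there exists a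
total order `⪯` on the isomorphism classes of simple `Λ/⟨a⟩`-modules such that whenever
`S ⪯ S'` one has `Ext^j_Λ(S, S') = 0` for all `j > 0`.

The simple `Λ/⟨a⟩`-modules are exactly the simple `Λ`-modules annihilated by the ideal
`⟨a⟩ = ΛaΛ`, i.e. with `a • s = 0` for all `s`; `(Λ/⟨a⟩)/rad(Λ/⟨a⟩)` is the direct sum
of all such simples, so `pd` (resp. `id`) of it is `≤ 1` iff `pd_Λ S ≤ 1` (resp.
`id_Λ S ≤ 1`) for every such simple `S`.  A total order on the isomorphism classes is
encoded as a total transitive relation on the simple annihilated modules which is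
antisymmetric up to isomorphism.  `pd X ≤ n` (resp. `id X ≤ n`) is expressed by
vanishing of `Ext^i(X,-)` (resp. `Ext^i(-,X)`) for `i > n`.
-/

open CategoryTheory

universe w u

/-- `X` has projective dimension at most `n`: `Ext^i(X, -) = 0` for `i > n`. -/
def pdLE {R : Type u} [Ring R] [HasExt.{w} (ModuleCat.{u} R)]
    (X : ModuleCat.{u} R) (n : ℕ) : Prop :=
  ∀ (i : ℕ), n < i → ∀ (Y : ModuleCat.{u} R), Subsingleton (Abelian.Ext X Y i)

/-- `X` has injective dimension at most `n`: `Ext^i(-, X) = 0` for `i > n`. -/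
def idLE {R : Type u} [Ring R] [HasExt.{w} (ModuleCat.{u} R)]
    (X : ModuleCat.{u} R) (n : ℕ) : Prop :=
  ∀ (i : ℕ), n < i → ∀ (Y : ModuleCat.{u} R), Subsingleton (Abelian.Ext Y X i)

/-- The simple `Λ`-modules annihilated by the two-sided ideal generated by `a`,
i.e. the simple `Λ/⟨a⟩`-modules. -/
def SimpleAnn {Λ : Type u} [Ring Λ] (a : Λ) : Type (u + 1) :=
  {S : ModuleCat.{u} Λ // IsSimpleModule Λ S ∧ ∀ s : S, a • s = 0}

open Limits

/-! ### Extensions realising classes in degree one -/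

/-- Every class in `Ext X Y 1` is the class of a short exact sequence `0 → Y → E → X → 0`:
pull back an injective presentation `0 → Y → I → I / Y → 0` along a morphism `X ⟶ I / Y`
representing the class. -/
lemma exists_shortExact_extClass_eq {C : Type*} [Category* C] [Abelian C] [HasExt.{w} C]
    [EnoughInjectives C] {X Y : C} (x : Abelian.Ext.{w} X Y 1) :
    ∃ (E : C) (i : Y ⟶ E) (p : E ⟶ X) (zero : i ≫ p = 0)
      (hS : (ShortComplex.mk i p zero).ShortExact), hS.extClass = x := by
  let j : Y ⟶ Injective.under Y := Injective.ι Y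
  let S₀ : ShortComplex C := ShortComplex.mk j (cokernel.π j) (cokernel.condition j)
  have hS₀ : S₀.ShortExact :=
    { exact := ShortComplex.exact_of_g_is_cokernel _ (cokernelIsCokernel j) }
  obtain ⟨q, hq⟩ := Abelian.Ext.covariant_sequence_exact₁ X hS₀ x
    (Abelian.Ext.eq_zero_of_injective (I := Injective.under Y) (n := 0) _) (zero_add 1)
  obtain ⟨q, rfl⟩ := Abelian.Ext.addEquiv₀.symm.surjective q
  let i : Y ⟶ pullback S₀.g q := pullback.lift S₀.f 0 (by simp)
  have hif : i ≫ pullback.fst S₀.g q = S₀.f := pullback.lift_fst _ _ _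
  have hip : i ≫ pullback.snd S₀.g q = 0 := pullback.lift_snd _ _ _
  have : Mono S₀.f := hS₀.mono_f
  have : Epi S₀.g := hS₀.epi_g
  have : Mono i := mono_of_mono_fac hif
  have hS : (ShortComplex.mk i (pullback.snd S₀.g q) hip).ShortExact :=
    { exact := by
        refine ShortComplex.exact_of_f_is_kernel _ (KernelFork.IsLimit.ofι' _ _ fun k hk ↦ ?_)
        have h0 : (k ≫ pullback.fst S₀.g q) ≫ S₀.g = 0 := by
          rw [Category.assoc, pullback.condition, reassoc_of% hk, zero_comp]
        refine ⟨hS₀.exact.lift _ h0, ?_⟩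
        apply pullback.hom_ext
        · simp [hif]
        · simpa [hip] using hk.symm }
  refine ⟨_, i, _, hip, hS, ?_⟩
  let φ : ShortComplex.mk i (pullback.snd S₀.g q) hip ⟶ S₀ :=
    { τ₁ := 𝟙 _
      τ₂ := pullback.fst _ _
      τ₃ := q
      comm₁₂ := by simp [hif, S₀]
      comm₂₃ := pullback.condition }
  have := ShortComplex.ShortExact.extClass_naturality hS hS₀ φ
  rw [← hq]
  simpa [φ] using this

/-! ### Radical powers, socles and tops -/

section Loewy

variable {Λ : Type u} [Ring Λ]

/-- Over a semiprimary ring with radical `J`, a module killed by `J` is semisimple. -/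
lemma isSemisimpleModule_of_jacobson_smul_eq_bot [IsSemiprimaryRing Λ] {M : Type*}
    [AddCommGroup M] [Module Λ M] (N : Submodule Λ M) (h : Ring.jacobson Λ • N = ⊥) :
    IsSemisimpleModule Λ N := by
  have hN : Module.IsTorsionBySet Λ N (Ring.jacobson Λ) := fun x a ↦ Subtype.ext <| by
    have : (a : Λ) • (x : M) ∈ Ring.jacobson Λ • N := Submodule.smul_mem_smul a.2 x.2
    simpa [h] using this
  let _ := hN.module
  exact (hN.semilinearMap.isSemisimpleModule_iff_of_bijective Function.bijective_id).2
    inferInstance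

/-- `ι : S ⟶ M` contains the socle of `M`: every morphism from a simple module to `M` factors
through `ι`. -/
def HasSocleIn {S M : ModuleCat.{u} Λ} (ι : S ⟶ M) : Prop :=
  ∀ ⦃T : ModuleCat.{u} Λ⦄, IsSimpleModule Λ T → ∀ f : T ⟶ M, ∃ g : T ⟶ S, g ≫ ι = f

/-- `M` has its top in `π : M ⟶ S`: every morphism from `M` to a simple module factors
through `π`. -/
def HasTopIn {M S : ModuleCat.{u} Λ} (π : M ⟶ S) : Prop :=
  ∀ ⦃T : ModuleCat.{u} Λ⦄, IsSimpleModule Λ T → ∀ f : M ⟶ T, ∃ g : S ⟶ T, π ≫ g = f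

/-- The submodule `Jᵏ M`, for `J` the Jacobson radical of `Λ`. -/
abbrev radPow (M : ModuleCat.{u} Λ) (k : ℕ) : Submodule Λ M :=
  (Ring.jacobson Λ ^ k) • (⊤ : Submodule Λ M)

/-- Enlarging a module at its socle increases its Loewy length: if `Jᵏ⁺¹ E = 0`, then `Jᵏ E` is
semisimple, hence contained in the socle of `E`, and so it dies in the quotient `M`. -/
lemma radPow_succ_ne_bot_of_socle [IsSemiprimaryRing Λ] {S E M : ModuleCat.{u} Λ} (i : S ⟶ E)
    (p : E ⟶ M) (zero : i ≫ p = 0) [Epi p] (hi : HasSocleIn i) {k : ℕ}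
    (hk : radPow M k ≠ ⊥) : radPow E (k + 1) ≠ ⊥ := by
  intro h
  rw [radPow, Ideal.IsTwoSided.pow_succ, Submodule.mul_smul] at h
  have := isSemisimpleModule_of_jacobson_smul_eq_bot _ h
  have hle : radPow E k ≤ LinearMap.ker p.hom := by
    have h1 : LinearMap.ker (p.hom ∘ₗ (radPow E k).subtype) = ⊤ := by
      rw [eq_top_iff, ← IsSemisimpleModule.sSup_simples_eq_top]
      refine sSup_le fun T hT x hx ↦ ?_
      have : IsSimpleModule Λ T := hT
      let t : ModuleCat.of Λ T ⟶ E := ModuleCat.ofHom ((radPow E k).subtype ∘ₗ T.subtype)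
      obtain ⟨g, hg⟩ := hi (T := ModuleCat.of Λ T) hT t
      have h0 : t ≫ p = 0 := by rw [← hg, Category.assoc, zero, comp_zero]
      exact LinearMap.congr_fun (congrArg ModuleCat.Hom.hom h0) (⟨x, hx⟩ : T)
    intro x hx
    have : (⟨x, hx⟩ : radPow E k) ∈ LinearMap.ker (p.hom ∘ₗ (radPow E k).subtype) :=
      h1 ▸ Submodule.mem_top
    exact this
  apply hk
  have hp : LinearMap.range p.hom = ⊤ := ModuleCat.range_eq_top_of_epi p
  rw [radPow, ← hp, ← Submodule.map_top, ← Submodule.map_smul'']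
  exact LinearMap.le_ker_iff_map.1 hle

/-- Over a semiprimary ring the intersection of the maximal submodules of `M` lies in `J M`. -/
lemma jacobson_le_smul_top [IsSemiprimaryRing Λ] (M : ModuleCat.{u} Λ) :
    Module.jacobson Λ M ≤ Ring.jacobson Λ • (⊤ : Submodule Λ M) := by
  apply Module.jacobson_le_of_eq_bot
  have : IsSemisimpleModule Λ (M ⧸ Ring.jacobson Λ • (⊤ : Submodule Λ M)) := by
    have : IsSemisimpleModule Λ
        (⊤ : Submodule Λ (M ⧸ Ring.jacobson Λ • (⊤ : Submodule Λ M))) := by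
      apply isSemisimpleModule_of_jacobson_smul_eq_bot
      rw [← Submodule.range_mkQ, ← Submodule.map_top, ← Submodule.map_smul'',
        ← LinearMap.le_ker_iff_map, Submodule.ker_mkQ]
    exact .congr Submodule.topEquiv.symm
  exact IsSemisimpleModule.jacobson_eq_bot _ _

/-- Enlarging a module at its top increases its Loewy length: if `M ⊆ E` is killed by every
morphism from `E` to a simple module, then `M ⊆ J E`. -/
lemma radPow_succ_ne_bot_of_top [IsSemiprimaryRing Λ] {M E S : ModuleCat.{u} Λ} (i : M ⟶ E)
    (p : E ⟶ S) (zero : i ≫ p = 0) [Mono i] (hp : HasTopIn p) {k : ℕ}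
    (hk : radPow M k ≠ ⊥) : radPow E (k + 1) ≠ ⊥ := by
  have hle : LinearMap.range i.hom ≤ Ring.jacobson Λ • (⊤ : Submodule Λ E) := by
    refine le_trans (le_sInf fun N hN ↦ ?_) (jacobson_le_smul_top E)
    obtain ⟨g, hg⟩ := hp (T := ModuleCat.of Λ (E ⧸ N)) (isSimpleModule_iff_isCoatom.2 hN)
      (ModuleCat.ofHom N.mkQ)
    have h0 : i ≫ ModuleCat.ofHom N.mkQ = 0 := by rw [← hg, reassoc_of% zero, zero_comp]
    rintro _ ⟨x, rfl⟩
    have : N.mkQ (i.hom x) = 0 := LinearMap.congr_fun (congrArg ModuleCat.Hom.hom h0) x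
    simpa using this
  intro h
  rw [radPow, Submodule.pow_succ, Submodule.mul_smul, eq_bot_iff] at h
  have h' := (Submodule.smul_mono (le_refl (Ring.jacobson Λ ^ k)) hle).trans h
  rw [← Submodule.map_top, ← Submodule.map_smul'', ← eq_bot_iff,
    ← LinearMap.le_ker_iff_map] at h'
  apply hk
  rwa [ModuleCat.ker_eq_bot_of_mono, le_bot_iff] at h'

lemma radPow_zero_ne_bot {S : ModuleCat.{u} Λ} (hS : IsSimpleModule Λ S) : radPow S 0 ≠ ⊥ := by
  have := IsSimpleModule.nontrivial Λ S
  rw [radPow, Submodule.pow_zero, Ideal.one_eq_top, Submodule.top_smul]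
  exact top_ne_bot

lemma exists_radPow_eq_bot [IsSemiprimaryRing Λ] :
    ∃ n, ∀ M : ModuleCat.{u} Λ, radPow M n = ⊥ := by
  obtain ⟨n, hn⟩ := IsSemiprimaryRing.isNilpotent (R := Λ)
  exact ⟨n, fun M ↦ by rw [radPow, hn]; simp⟩

end Loewy

/-! ### Well-foundedness of the Ext-quiver -/

section Step

variable {Λ : Type u} [Ring Λ] [HasExt.{w} (ModuleCat.{u} Λ)]

open Abelian

/-- If `id T ≤ 1` and `Ext¹(S, T) ≠ 0`, a module `M` with socle in `S` and `Jᵏ M ≠ 0` yields a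
module `E` with socle in `T` and `Jᵏ⁺¹ E ≠ 0`, namely an extension of `M` by `T`. -/
lemma exists_socle_step [IsSemiprimaryRing Λ] {S T M : ModuleCat.{u} Λ} (hS : IsSimpleModule Λ S)
    (hT : idLE.{w} T 1) (hST : ¬ Subsingleton (Ext.{w} S T 1)) {k : ℕ} (ι : S ⟶ M) [Mono ι]
    (hι : HasSocleIn ι) (hk : radPow M k ≠ ⊥) :
    ∃ (E : ModuleCat.{u} Λ) (i : T ⟶ E), Mono i ∧ HasSocleIn i ∧ radPow E (k + 1) ≠ ⊥ := by
  have := (simple_iff_isSimpleModule' _).2 hS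
  rw [not_subsingleton_iff_nontrivial] at hST
  obtain ⟨x, hx⟩ := exists_ne (0 : Ext.{w} S T 1)
  let S₀ : ShortComplex (ModuleCat.{u} Λ) :=
    ShortComplex.mk ι (cokernel.π ι) (cokernel.condition ι)
  have hS₀ : S₀.ShortExact :=
    { exact := ShortComplex.exact_of_g_is_cokernel _ (cokernelIsCokernel ι) }
  -- `x` lifts along `ι` because the obstruction lies in `Ext²(M / S, T) = 0`.
  obtain ⟨y, hy⟩ := Ext.contravariant_sequence_exact₁ hS₀ T x (n₁ := 2) rfl
    ((hT 2 one_lt_two _).elim _ _)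
  obtain ⟨E, i, p, zero, hE, rfl⟩ := exists_shortExact_extClass_eq y
  have : Mono i := hE.mono_f
  have : Epi p := hE.epi_g
  have hi : HasSocleIn i := by
    intro U hU f
    have := (simple_iff_isSimpleModule' _).2 hU
    obtain ⟨g, hg⟩ := hι hU (f ≫ p)
    by_cases hg0 : g = 0
    · exact ⟨hE.exact.lift f (by rw [← hg, hg0, zero_comp]), hE.exact.lift_f _ _⟩
    -- If `g ≠ 0`, `S` lifts to `E`, so that the restriction `x` of the extension to `S` splits.
    · have := isIso_of_hom_simple hg0
      refine absurd ?_ hx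
      have hι' : ι = (inv g ≫ f) ≫ p := by simp [← hg]
      rw [← hy]
      change (Ext.mk₀ ι).comp _ _ = _
      rw [hι', ← Ext.mk₀_comp_mk₀, Ext.comp_assoc_of_second_deg_zero, hE.comp_extClass,
        Ext.comp_zero]
  exact ⟨E, i, inferInstance, hi, radPow_succ_ne_bot_of_socle i p zero hi hk⟩

/-- If `pd S ≤ 1` and `Ext¹(S, T) ≠ 0`, a module `M` with top in `T` and `Jᵏ M ≠ 0` yields a
module `E` with top in `S` and `Jᵏ⁺¹ E ≠ 0`, namely an extension of `S` by `M`. -/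
lemma exists_top_step [IsSemiprimaryRing Λ] {S T M : ModuleCat.{u} Λ} (hT : IsSimpleModule Λ T)
    (hS : pdLE.{w} S 1) (hST : ¬ Subsingleton (Ext.{w} S T 1)) {k : ℕ} (π : M ⟶ T) [Epi π]
    (hπ : HasTopIn π) (hk : radPow M k ≠ ⊥) :
    ∃ (E : ModuleCat.{u} Λ) (p : E ⟶ S), Epi p ∧ HasTopIn p ∧ radPow E (k + 1) ≠ ⊥ := by
  have := (simple_iff_isSimpleModule' _).2 hT
  rw [not_subsingleton_iff_nontrivial] at hST
  obtain ⟨x, hx⟩ := exists_ne (0 : Ext.{w} S T 1)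
  let S₀ : ShortComplex (ModuleCat.{u} Λ) :=
    ShortComplex.mk (kernel.ι π) π (kernel.condition π)
  have hS₀ : S₀.ShortExact :=
    { exact := ShortComplex.exact_of_f_is_kernel _ (kernelIsKernel π) }
  -- `x` lifts along `π` because the obstruction lies in `Ext²(S, ker π) = 0`.
  obtain ⟨y, hy⟩ := Ext.covariant_sequence_exact₃ S hS₀ x (n₁ := 2) rfl
    ((hS 2 one_lt_two _).elim _ _)
  obtain ⟨E, i, p, zero, hE, rfl⟩ := exists_shortExact_extClass_eq y
  have : Mono i := hE.mono_f
  have : Epi p := hE.epi_g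
  have hp : HasTopIn p := by
    intro U hU f
    have := (simple_iff_isSimpleModule' _).2 hU
    obtain ⟨g, hg⟩ := hπ hU (i ≫ f)
    by_cases hg0 : g = 0
    · exact ⟨hE.exact.desc f (by rw [← hg, hg0, comp_zero]), hE.exact.g_desc _ _⟩
    -- If `g ≠ 0`, `π` extends to `E`, so that the image `x` of the extension under `π` splits.
    · have := isIso_of_hom_simple hg0
      refine absurd ?_ hx
      have hπ' : π = i ≫ (f ≫ inv g) := by simp [← reassoc_of% hg]
      rw [← hy]
      change Ext.comp _ (Ext.mk₀ π) _ = _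
      rw [hπ', ← Ext.mk₀_comp_mk₀, ← Ext.comp_assoc_of_second_deg_zero, hE.extClass_comp,
        Ext.zero_comp]
  exact ⟨E, p, inferInstance, hp, radPow_succ_ne_bot_of_top i p zero hp hk⟩

/-- An infinite chain `S₀, S₁, …` with `Ext¹(Sₙ, Sₙ₊₁) ≠ 0` would produce modules of unbounded
Loewy length, the `n`-th one having socle in `Sₙ`. -/
lemma wellFounded_of_idLE [IsSemiprimaryRing Λ] {a : Λ} (h : ∀ S : SimpleAnn a, idLE.{w} S.1 1) :
    WellFounded fun T S : SimpleAnn a ↦ ¬ Subsingleton (Ext.{w} S.1 T.1 1) := by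
  rw [wellFounded_iff_isEmpty_descending_chain]
  refine ⟨fun ⟨s, hs⟩ ↦ ?_⟩
  have key (k : ℕ) : ∃ (M : ModuleCat.{u} Λ) (i : (s k).1 ⟶ M),
      Mono i ∧ HasSocleIn i ∧ radPow M k ≠ ⊥ := by
    induction k with
    | zero => exact ⟨_, 𝟙 _, inferInstance, fun _ _ f ↦ ⟨f, by simp⟩,
        radPow_zero_ne_bot (s 0).2.1⟩
    | succ k ih =>
      obtain ⟨M, ι, _, hι, hk⟩ := ih
      exact exists_socle_step (s k).2.1 (h _) (hs k) ι hι hk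
  obtain ⟨n, hn⟩ := exists_radPow_eq_bot (Λ := Λ)
  obtain ⟨M, -, -, -, hM⟩ := key n
  exact hM (hn M)

/-- An infinite chain `S₀, S₁, …` with `Ext¹(Sₙ₊₁, Sₙ) ≠ 0` would produce modules of unbounded
Loewy length, the `n`-th one having top in `Sₙ`. -/
lemma wellFounded_of_pdLE [IsSemiprimaryRing Λ] {a : Λ} (h : ∀ S : SimpleAnn a, pdLE.{w} S.1 1) :
    WellFounded fun S T : SimpleAnn a ↦ ¬ Subsingleton (Ext.{w} S.1 T.1 1) := by
  rw [wellFounded_iff_isEmpty_descending_chain]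
  refine ⟨fun ⟨s, hs⟩ ↦ ?_⟩
  have key (k : ℕ) : ∃ (M : ModuleCat.{u} Λ) (p : M ⟶ (s k).1),
      Epi p ∧ HasTopIn p ∧ radPow M k ≠ ⊥ := by
    induction k with
    | zero => exact ⟨_, 𝟙 _, inferInstance, fun _ _ f ↦ ⟨f, by simp⟩,
        radPow_zero_ne_bot (s 0).2.1⟩
    | succ k ih =>
      obtain ⟨M, π, _, hπ, hk⟩ := ih
      exact exists_top_step (s k).2.1 (h _) (hs k) π hπ hk
  obtain ⟨n, hn⟩ := exists_radPow_eq_bot (Λ := Λ)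
  obtain ⟨M, -, -, -, hM⟩ := key n
  exact hM (hn M)

/-- A height function for the `Ext¹`-quiver gives the order: compare heights in reverse and break
ties by an arbitrary linear order on the isomorphism classes. -/
lemma exists_order_of_height {a : Λ} {α : Type*} [LinearOrder α] (ρ : SimpleAnn a → α)
    (hρ : ∀ S T : SimpleAnn a, ¬ Subsingleton (Ext.{w} S.1 T.1 1) → ρ S < ρ T)
    (h2 : ∀ (S T : SimpleAnn a) (j : ℕ), 1 < j → Subsingleton (Ext.{w} S.1 T.1 j)) :
    ∃ le : SimpleAnn a → SimpleAnn a → Prop,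
      (∀ S S', le S S' ∨ le S' S) ∧
      (∀ S S' S'', le S S' → le S' S'' → le S S'') ∧
      (∀ S S', le S S' → le S' S → Nonempty (S.1 ≅ S'.1)) ∧
      (∀ S S', le S S' → ∀ j : ℕ, 0 < j → Subsingleton (Ext.{w} S.1 S'.1 j)) := by
  let c : SimpleAnn a → Quotient (isIsomorphicSetoid (ModuleCat.{u} Λ)) := fun S ↦ ⟦S.1⟧
  classical
  let _ : LinearOrder (Quotient (isIsomorphicSetoid (ModuleCat.{u} Λ))) :=
    (linearOrderOfSTO WellOrderingRel)
  let key (S : SimpleAnn a) := toLex (ρ S, c S)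
  refine ⟨fun S S' ↦ key S' ≤ key S, fun _ _ ↦ le_total _ _, fun _ _ _ h h' ↦ h'.trans h,
    fun S S' h h' ↦ ?_, fun S S' h j hj ↦ ?_⟩
  · have hc : c S = c S' := (Prod.ext_iff.1 (toLex.injective (le_antisymm h' h))).2
    exact Quotient.exact hc
  · obtain rfl | hj : j = 1 ∨ 1 < j := by lia
    · by_contra hne
      have : key S < key S' := Prod.Lex.toLex_lt_toLex.2 (Or.inl (hρ S S' hne))
      exact this.not_ge h
    · exact h2 S S' j hj

end Step

theorem stmt_15 {R₀ : Type u} [CommRing R₀] [IsArtinianRing R₀]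
    {Λ : Type u} [Ring Λ] [Algebra R₀ Λ] [Module.Finite R₀ Λ]
    (a : Λ) (ha : IsIdempotentElem a) [HasExt.{w} (ModuleCat.{u} Λ)]
    (h : (∀ S : SimpleAnn a, idLE.{w, u} S.1 1) ∨
         (∀ S : SimpleAnn a, pdLE.{w, u} S.1 1)) :
    ∃ le : SimpleAnn a → SimpleAnn a → Prop,
      (∀ S S', le S S' ∨ le S' S) ∧
      (∀ S S' S'', le S S' → le S' S'' → le S S'') ∧
      (∀ S S', le S S' → le S' S → Nonempty (S.1 ≅ S'.1)) ∧
      (∀ S S', le S S' → ∀ j : ℕ, 0 < j →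
        Subsingleton (Abelian.Ext S.1 S'.1 j)) := by
  have : IsArtinianRing Λ := IsArtinianRing.of_finite R₀ Λ
  rcases h with h | h
  · have hwf := wellFounded_of_idLE h
    have : IsWellFounded _ _ := ⟨hwf⟩
    exact exists_order_of_height
      (fun S ↦ OrderDual.toDual (IsWellFounded.rank
        (fun T S : SimpleAnn a ↦ ¬ Subsingleton (Abelian.Ext.{w} S.1 T.1 1)) S))
      (fun S T hST ↦ OrderDual.toDual_lt_toDual.2 (IsWellFounded.rank_lt_of_rel hST))
      fun S T j hj ↦ h T j hj S.1
  · have hwf := wellFounded_of_pdLE h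
    have : IsWellFounded _ _ := ⟨hwf⟩
    exact exists_order_of_height
      (fun S ↦ IsWellFounded.rank
        (fun S T : SimpleAnn a ↦ ¬ Subsingleton (Abelian.Ext.{w} S.1 T.1 1)) S)
      (fun S T hST ↦ IsWellFounded.rank_lt_of_rel hST)
      fun S T j hj ↦ h S j hj T.1
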